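/- Let m ≥ 2 be an integer, let x_1, ..., x_n be independent Bernoulli random variables with means μ_1, ..., μ_n ∈ [0,1], and let y_1, ..., y_n be independent Bernoulli random variables with means (2/m)·μ_1, ..., (2/m)·μ_n. Then (1/2)·E[min(y_1 + ... + y_n, 2)] ≤ (1/m)·E[min(x_1 + ... + x_n, m)]. -/

import Mathlib

/-!
We model a family of `n` independent Bernoulli random variables with means
`p : Fin n → ℝ` by their joint (product) distribution on `Fin n → Bool`:
the outcome `ω` has probability `∏ i, (if ω i then p i else 1 - p i)`.
-/

/-- number of successes in outcome `ω` -/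
def bCount {n : ℕ} (ω : Fin n → Bool) : ℕ := ∑ i, if ω i then 1 else 0

/-- joint probability of the outcome `ω` for independent Bernoulli variables
with means `p` -/
noncomputable def bernWeight {n : ℕ} (p : Fin n → ℝ) (ω : Fin n → Bool) : ℝ :=
  ∏ i, if ω i then p i else 1 - p i

/-- expectation of `g(x_1 + ⋯ + x_n)` for independent Bernoulli variables `x_i`
with means `p` -/
noncomputable def bernExp {n : ℕ} (p : Fin n → ℝ) (g : ℕ → ℝ) : ℝ :=
  ∑ ω : Fin n → Bool, bernWeight p ω * g (bCount ω)

/-- `E[g(Bin(k,q))]`, defined recursively. -/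
noncomputable def binExp (q : ℝ) : ℕ → (ℕ → ℝ) → ℝ
  | 0, g => g 0
  | k + 1, g => q * binExp q k (fun c => g (c + 1)) + (1 - q) * binExp q k g

theorem bernExp_succ {n : ℕ} (p : Fin (n + 1) → ℝ) (g : ℕ → ℝ) :
    bernExp p g = p 0 * bernExp (fun i => p i.succ) (fun c => g (c + 1))
      + (1 - p 0) * bernExp (fun i => p i.succ) g := by
  unfold bernExp
  rw [← (Fin.consEquiv (fun _ => Bool)).sum_comp, Fintype.sum_prod_type, Fintype.sum_bool,
    Finset.mul_sum, Finset.mul_sum]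
  congr 1 <;> refine Finset.sum_congr rfl fun ω _ => ?_ <;>
    simp [bernWeight, bCount, Fin.consEquiv, Fin.prod_univ_succ, Fin.sum_univ_succ, mul_assoc,
      add_comm]

theorem bernExp_lin {n : ℕ} (p : Fin n → ℝ) (a b : ℝ) (f g : ℕ → ℝ) :
    bernExp p (fun c => a * f c + b * g c) = a * bernExp p f + b * bernExp p g := by
  unfold bernExp
  rw [Finset.mul_sum, Finset.mul_sum, ← Finset.sum_add_distrib]
  exact Finset.sum_congr rfl fun ω _ => by ring

theorem bernExp_mono {n : ℕ} (p : Fin n → ℝ) (hp : ∀ i, 0 ≤ p i ∧ p i ≤ 1) (f g : ℕ → ℝ)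
    (h : ∀ c, f c ≤ g c) : bernExp p f ≤ bernExp p g := by
  unfold bernExp
  refine Finset.sum_le_sum fun ω _ => mul_le_mul_of_nonneg_left (h _) ?_
  refine Finset.prod_nonneg fun i _ => ?_
  have := hp i
  split_ifs <;> linarith

/-- Thinning identity. -/
theorem bernExp_thin (q : ℝ) : ∀ {n : ℕ} (p : Fin n → ℝ) (g : ℕ → ℝ),
    bernExp (fun i => q * p i) g = bernExp p (fun k => binExp q k g) := by
  intro n
  induction n with
  | zero => intro p g; simp [bernExp, bernWeight, bCount, binExp]
  | succ n ih =>
    intro p g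
    rw [bernExp_succ, bernExp_succ]
    simp only [binExp]
    rw [bernExp_lin, ih, ih]
    ring

theorem binExp_le (q : ℝ) (h0 : 0 ≤ q) (h1 : q ≤ 1) (b : ℝ) (k : ℕ) :
    ∀ (a : ℝ) (g : ℕ → ℝ), (∀ c, g c ≤ a + b * c) → binExp q k g ≤ a + b * (q * k) := by
  induction k with
  | zero => intro a g h; simpa [binExp] using h 0
  | succ k ih =>
    intro a g h
    have e1 := ih (a + b) (fun c => g (c + 1)) (fun c => by
      have := h (c + 1)
      push_cast at this
      linarith)
    have e2 := ih a g h
    have e3 := mul_le_mul_of_nonneg_left e1 h0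
    have e4 := mul_le_mul_of_nonneg_left e2 (sub_nonneg.2 h1)
    simp only [binExp]
    push_cast
    linarith

/-- For an integer `m ≥ 2`, independent Bernoulli variables
`x_1, …, x_n` with means `μ_i ∈ [0,1]` and independent Bernoulli variables
`y_1, …, y_n` with means `(2/m)·μ_i`, we have
`(1/2)·E[min(∑ y_i, 2)] ≤ (1/m)·E[min(∑ x_i, m)]`. -/
theorem bernoulli_min_expectation_two_le (n m : ℕ) (hm : 2 ≤ m)
    (μ : Fin n → ℝ) (hμ : ∀ i, 0 ≤ μ i ∧ μ i ≤ 1) :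
    (1 / 2 : ℝ) * bernExp (fun i => (2 / (m : ℝ)) * μ i)
        (fun c => ((min c 2 : ℕ) : ℝ)) ≤
      (1 / (m : ℝ)) * bernExp μ (fun c => ((min c m : ℕ) : ℝ)) := by
  have hm' : (2 : ℝ) ≤ m := by exact_mod_cast hm
  have hpos : (0 : ℝ) < m := by linarith
  have h0 : (0 : ℝ) ≤ 2 / m := by positivity
  have h1 : (2 : ℝ) / m ≤ 1 := by rw [div_le_one hpos]; exact hm'
  rw [bernExp_thin]
  have key := bernExp_mono μ hμ
    (fun k => binExp (2 / (m : ℝ)) k (fun c => ((min c 2 : ℕ) : ℝ)))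
    (fun c => (2 / (m : ℝ)) * ((min c m : ℕ) : ℝ) + 0 * 0) (by
      intro k
      have a1 := binExp_le (2 / (m : ℝ)) h0 h1 1 k 0 (fun c => ((min c 2 : ℕ) : ℝ)) (fun c => by
        have : ((min c 2 : ℕ) : ℝ) ≤ c := by exact_mod_cast min_le_left c 2
        linarith)
      have a2 := binExp_le (2 / (m : ℝ)) h0 h1 0 k 2 (fun c => ((min c 2 : ℕ) : ℝ)) (fun c => by
        have : ((min c 2 : ℕ) : ℝ) ≤ 2 := by exact_mod_cast min_le_right c 2
        linarith)
      have a3 : (2 : ℝ) / m * m = 2 := by field_simp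
      rcases le_total k m with h | h
      · simp only [min_eq_left h]; linarith
      · simp only [min_eq_right h]; linarith)
  rw [bernExp_lin μ (2 / (m : ℝ)) 0 (fun c => ((min c m : ℕ) : ℝ)) (fun _ => 0)] at key
  have e : (1 / (m : ℝ)) = 1 / 2 * (2 / m) := by field_simp
  rw [e]
  linarith
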